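/- The multilinear GL_d-invariant functions on End(V)^{⊕m}, where GL_d = GL(V₁)×⋯×GL(Vₙ) acts by simultaneous local conjugation on V = V₁⊗⋯⊗Vₙ, are spanned by the trace monomials Tr_σ for σ ∈ (S_m)ⁿ, where for σ = (σ₁,…,σₙ), Tr_σ(⊗ⱼM_{j1}, …, ⊗ⱼM_{jm}) = ∏ᵢ T_{σᵢ}, with T_{σᵢ} being the product over cycles (r₁⋯r_k) of σᵢ of Tr(M_{i r₁}⋯M_{i r_k}), extended multilinearly. -/

import Mathlib

/-- The Kronecker (tensor) product `g₁ ⊗ ⋯ ⊗ gₙ` of local matrices. -/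
noncomputable def kron {k : Type*} [Field k] {n : ℕ} {d : Fin n → ℕ}
    (g : ∀ i, Matrix (Fin (d i)) (Fin (d i)) k) :
    Matrix (∀ i, Fin (d i)) (∀ i, Fin (d i)) k :=
  fun a b => ∏ i, g i (a i) (b i)

/-- The trace monomial `Tr_σ` for `σ = (σ₁,…,σₙ) ∈ (S_m)ⁿ`: the multilinear extension of
`⊗ⱼMⱼ ↦ ∏ᵢ T_{σᵢ}`, where `T_{σᵢ}` is the product over cycles `(r₁⋯r_k)` of `σᵢ` of
`Tr(M_{i r₁} ⋯ M_{i r_k})`.  Concretely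
`Tr_σ(M₁,…,M_m) = ∑_a ∏ⱼ Mⱼ (a j) (fun i => a (σᵢ j) i)`. -/
noncomputable def trMon {k : Type*} [Field k] {n m : ℕ} {d : Fin n → ℕ}
    (σ : Fin n → Equiv.Perm (Fin m))
    (M : Fin m → Matrix (∀ i, Fin (d i)) (∀ i, Fin (d i)) k) : k :=
  ∑ a : Fin m → ∀ i, Fin (d i), ∏ j, M j (a j) (fun i => a (σ i j) i)

/-- A function of `m` matrix arguments is multilinear if it is linear in each slot. -/
def IsMultilinearFn {k : Type*} [Field k] {m : ℕ} {α : Type*} [AddCommGroup α] [Module k α]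
    (F : (Fin m → α) → k) : Prop :=
  ∀ (M : Fin m → α) (j : Fin m) (x y : α) (c : k),
    F (Function.update M j (x + c • y)) =
      F (Function.update M j x) + c * F (Function.update M j y)


section FFTaux

variable {k : Type*} [Field k] {n m : ℕ} {d : Fin n → ℕ}

/-- The right action of `(S_m)ⁿ` on multi-indices. -/
def pAct (σ : Fin n → Equiv.Perm (Fin m)) (b : Fin m → ∀ i, Fin (d i)) :
    Fin m → ∀ i, Fin (d i) := fun j i => b (σ i j) i

theorem pAct_injective (σ : Fin n → Equiv.Perm (Fin m)) :
    Function.Injective (pAct (d := d) σ) := by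
  intro a b h
  funext j i
  have := congrFun (congrFun h ((σ i).symm j)) i
  simpa [pAct] using this

/-- The permutation of multi-indices. -/
noncomputable def pEquiv (σ : Fin n → Equiv.Perm (Fin m)) :
    (Fin m → ∀ i, Fin (d i)) ≃ (Fin m → ∀ i, Fin (d i)) :=
  Equiv.ofBijective (pAct σ) (Finite.injective_iff_bijective.mp (pAct_injective σ))

/-- Tensor power of the Kronecker product, as a matrix. -/
noncomputable def kPow {R : Type*} [CommSemiring R]
    (g : ∀ i, Matrix (Fin (d i)) (Fin (d i)) R) :
    Matrix (Fin m → ∀ i, Fin (d i)) (Fin m → ∀ i, Fin (d i)) R :=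
  fun a b => ∏ j, ∏ i, g i (a j i) (b j i)

theorem kPow_act {R : Type*} [CommSemiring R]
    (g : ∀ i, Matrix (Fin (d i)) (Fin (d i)) R) (σ : Fin n → Equiv.Perm (Fin m))
    (a b : Fin m → ∀ i, Fin (d i)) : kPow g (pAct σ a) (pAct σ b) = kPow g a b := by
  unfold kPow pAct
  rw [Finset.prod_comm, Finset.prod_comm (s := Finset.univ (α := Fin m))]
  refine Finset.prod_congr rfl fun i _ => ?_
  exact Equiv.prod_comp (σ i) (fun j => g i (a j i) (b j i))

/-- Exponent of the monomial attached to a pair of multi-indices. -/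
noncomputable def pExp (a b : Fin m → ∀ i, Fin (d i)) :
    (Σ i, Fin (d i) × Fin (d i)) →₀ ℕ :=
  ∑ j, ∑ i, Finsupp.single ⟨i, (a j i, b j i)⟩ 1

theorem pExp_apply (a b : Fin m → ∀ i, Fin (d i)) (i : Fin n) (p : Fin (d i) × Fin (d i)) :
    pExp a b ⟨i, p⟩ = Fintype.card {j // (a j i, b j i) = p} := by
  classical
  unfold pExp
  rw [Fintype.card_subtype, Finsupp.finsetSum_apply]
  simp_rw [Finsupp.finsetSum_apply, Finsupp.single_apply]
  have : ∀ j, (∑ x, if (⟨x, (a j x, b j x)⟩ : Σ i, Fin (d i) × Fin (d i)) = ⟨i, p⟩ then 1 else 0)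
      = if (a j i, b j i) = p then 1 else 0 := by
    intro j
    rw [Finset.sum_eq_single i]
    · simp
    · intro x _ hx
      rw [if_neg]
      intro h
      exact hx (congrArg Sigma.fst h)
    · simp
  simp_rw [this]
  rw [Finset.sum_boole]
  rfl

theorem pExp_orbit {a b a' b' : Fin m → ∀ i, Fin (d i)} (h : pExp a b = pExp a' b') :
    ∃ σ : Fin n → Equiv.Perm (Fin m), a = pAct σ a' ∧ b = pAct σ b' := by
  have h1 : ∀ i, ∃ s : Equiv.Perm (Fin m),
      (fun j => (a j i, b j i)) = (fun j => (a' j i, b' j i)) ∘ s := by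
    intro i
    have e : ∀ p : Fin (d i) × Fin (d i),
        {j // (a j i, b j i) = p} ≃ {j // (a' j i, b' j i) = p} := fun p =>
      Fintype.equivOfCardEq (by rw [← pExp_apply, ← pExp_apply, h])
    exact ⟨Equiv.ofFiberEquiv e, funext fun j => (Equiv.ofFiberEquiv_map e j).symm⟩
  choose σ hσ using h1
  refine ⟨σ, ?_, ?_⟩
  · funext j i
    exact congrArg Prod.fst (congrFun (hσ i) j)
  · funext j i
    exact congrArg Prod.snd (congrFun (hσ i) j)

/-- Generic matrices. -/
noncomputable def gen (k : Type*) [Field k] {n : ℕ} (d : Fin n → ℕ) (i : Fin n) :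
    Matrix (Fin (d i)) (Fin (d i)) (MvPolynomial (Σ i, Fin (d i) × Fin (d i)) k) :=
  fun p q => MvPolynomial.X ⟨i, (p, q)⟩

theorem gen_eval (x : (Σ i, Fin (d i) × Fin (d i)) → k) (i : Fin n) :
    (MvPolynomial.eval x).mapMatrix (gen k d i) = Matrix.of fun p q => x ⟨i, (p, q)⟩ := by
  ext p q
  simp [gen]

theorem gen_det_ne (i : Fin n) : (gen k d i).det ≠ 0 := by
  intro h
  have h2 := congrArg (MvPolynomial.eval
    (fun s : (Σ i, Fin (d i) × Fin (d i)) => if s.2.1 = s.2.2 then (1 : k) else 0)) h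
  rw [RingHom.map_det, gen_eval, map_zero] at h2
  have h3 : (Matrix.of fun p q : Fin (d i) => if p = q then (1 : k) else 0) = 1 := by
    ext p q
    simp [Matrix.one_apply]
  rw [h3, Matrix.det_one] at h2
  exact one_ne_zero h2

theorem kPow_gen (a b : Fin m → ∀ i, Fin (d i)) :
    kPow (gen k d) a b = MvPolynomial.monomial (pExp a b) 1 := by
  unfold kPow gen pExp
  rw [MvPolynomial.monomial_sum_one]
  simp_rw [MvPolynomial.monomial_sum_one]
  rfl

theorem kPow_gen_eval (x : (Σ i, Fin (d i) × Fin (d i)) → k) (a b : Fin m → ∀ i, Fin (d i)) :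
    MvPolynomial.eval x (kPow (gen k d) a b) = kPow (fun i => Matrix.of fun p q => x ⟨i, (p, q)⟩) a b := by
  simp [kPow, gen, map_prod]

theorem poly_comm [Infinite k]
    (T : Matrix (Fin m → ∀ i, Fin (d i)) (Fin m → ∀ i, Fin (d i)) k)
    (hT : ∀ g : ∀ i, Matrix (Fin (d i)) (Fin (d i)) k, (∀ i, IsUnit (g i)) →
      T * kPow g = kPow g * T) (a c : Fin m → ∀ i, Fin (d i)) :
    ∑ b, MvPolynomial.C (T a b) * kPow (gen k d) b c
      = ∑ b, kPow (gen k d) a b * MvPolynomial.C (T b c) := by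
  rw [← sub_eq_zero]
  have hne : ∏ i, (gen k d i).det ≠ 0 := Finset.prod_ne_zero_iff.mpr fun i _ => gen_det_ne i
  refine (mul_eq_zero.mp ?_).resolve_right hne
  apply MvPolynomial.funext
  intro x
  rw [map_mul, map_zero, map_prod]
  by_cases hx : ∀ i, IsUnit (Matrix.of fun p q : Fin (d i) => x ⟨i, (p, q)⟩)
  · have := congrFun (congrFun (hT _ hx) a) c
    rw [Matrix.mul_apply, Matrix.mul_apply] at this
    simp only [map_sub, map_sum, map_mul, kPow_gen_eval, MvPolynomial.eval_C]
    rw [this, sub_self, zero_mul]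
  · push Not at hx
    obtain ⟨i, hi⟩ := hx
    rw [Finset.prod_eq_zero (Finset.mem_univ i), mul_zero]
    rw [RingHom.map_det, gen_eval]
    rw [Matrix.isUnit_iff_isUnit_det, isUnit_iff_ne_zero, not_not] at hi
    exact hi

theorem comm_of_inv [Infinite k]
    (T S : Matrix (Fin m → ∀ i, Fin (d i)) (Fin m → ∀ i, Fin (d i)) k)
    (hT : ∀ g : ∀ i, Matrix (Fin (d i)) (Fin (d i)) k, (∀ i, IsUnit (g i)) →
      T * kPow g = kPow g * T)
    (hS : ∀ σ a b, S (pAct σ a) (pAct σ b) = S a b) : T * S = S * T := by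
  classical
  let s : ((Σ i, Fin (d i) × Fin (d i)) →₀ ℕ) → k := fun e =>
    if h : ∃ p : (Fin m → ∀ i, Fin (d i)) × (Fin m → ∀ i, Fin (d i)), pExp p.1 p.2 = e
    then S h.choose.1 h.choose.2 else 0
  have hs : ∀ a b, s (pExp a b) = S a b := by
    intro a b
    have h : ∃ p : (Fin m → ∀ i, Fin (d i)) × (Fin m → ∀ i, Fin (d i)),
      pExp p.1 p.2 = pExp a b := ⟨(a, b), rfl⟩
    simp only [s, dif_pos h]
    obtain ⟨σ, h1, h2⟩ := pExp_orbit h.choose_spec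
    rw [h1, h2, hS]
  let L : MvPolynomial (Σ i, Fin (d i) × Fin (d i)) k →ₗ[k] k :=
    (MvPolynomial.basisMonomials _ k).constr k s
  have hL : ∀ a b, L (kPow (gen k d) a b) = S a b := by
    intro a b
    rw [kPow_gen, ← hs]
    have := (MvPolynomial.basisMonomials (Σ i, Fin (d i) × Fin (d i)) k).constr_basis k s (pExp a b)
    rwa [MvPolynomial.coe_basisMonomials] at this
  ext a c
  have := congrArg L (poly_comm T hT a c)
  simp only [mul_comm _ (MvPolynomial.C _), ← MvPolynomial.smul_eq_C_mul, map_sum, map_smul, hL,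
    smul_eq_mul] at this
  rw [Matrix.mul_apply, Matrix.mul_apply, this]
  exact Finset.sum_congr rfl fun _ _ => mul_comm _ _

/-- The permutation representation. -/
noncomputable def pRep (k : Type*) [Field k] {n : ℕ} (m : ℕ) (d : Fin n → ℕ) :
    Representation k (Fin n → Equiv.Perm (Fin m)) ((Fin m → ∀ i, Fin (d i)) → k) where
  toFun σ := LinearMap.funLeft k k (pAct σ)
  map_one' := by
    ext; rfl
  map_mul' σ τ := by
    ext; rfl

theorem exists_coeff [CharZero k]
    (T : Matrix (Fin m → ∀ i, Fin (d i)) (Fin m → ∀ i, Fin (d i)) k)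
    (hT : ∀ S : Matrix (Fin m → ∀ i, Fin (d i)) (Fin m → ∀ i, Fin (d i)) k,
      (∀ σ a b, S (pAct σ a) (pAct σ b) = S a b) → T * S = S * T) :
    ∃ c : (Fin n → Equiv.Perm (Fin m)) → k,
      ∀ b a, T b a = ∑ σ, if a = pAct σ b then c σ else 0 := by
  classical
  have : NeZero (Nat.card (Fin n → Equiv.Perm (Fin m)) : k) :=
    ⟨Nat.cast_ne_zero.mpr Nat.card_pos.ne'⟩
  let ρ := pRep k m d
  let f : Module.End (Module.End (MonoidAlgebra k (Fin n → Equiv.Perm (Fin m))) ρ.asModule)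
      ρ.asModule :=
    { toFun := fun v => ρ.asModuleEquiv.symm (T.mulVec (ρ.asModuleEquiv v))
      map_add' := by
        intro x y
        simp [Matrix.mulVec_add]
      map_smul' := by
        intro φ v
        let φ' : ((Fin m → ∀ i, Fin (d i)) → k) →ₗ[k] ((Fin m → ∀ i, Fin (d i)) → k) :=
          ρ.asModuleEquiv.toLinearMap ∘ₗ φ.restrictScalars k ∘ₗ ρ.asModuleEquiv.symm.toLinearMap
        have hφ : ∀ σ v, φ' (ρ σ v) = ρ σ (φ' v) := by
          intro σ v
          have h1 := φ.map_smul (MonoidAlgebra.of k _ σ) (ρ.asModuleEquiv.symm v)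
          rw [← Representation.asModuleEquiv_symm_map_rho] at h1
          have h2 := congrArg ρ.asModuleEquiv h1
          rw [Representation.asModuleEquiv_map_smul, Representation.asAlgebraHom_of] at h2
          exact h2
        have hsing : ∀ σ (b : Fin m → ∀ i, Fin (d i)),
            ρ σ (Pi.single (pAct σ b) (1 : k)) = Pi.single b 1 := by
          intro σ b
          funext x
          change (Pi.single (pAct σ b) (1 : k) : _ → k) (pAct σ x) = _
          simp only [Pi.single_apply, (pAct_injective σ).eq_iff]
        have hS := hT (LinearMap.toMatrix' φ') (by
          intro σ a b
          have hm : ∀ x y, LinearMap.toMatrix' φ' x y = φ' (Pi.single y 1) x := by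
            intro x y
            rw [LinearMap.toMatrix'_apply]
          rw [hm, hm, ← hsing σ b, hφ]
          rfl)
        have h3 := congrArg (fun A => A.mulVec (ρ.asModuleEquiv v)) hS
        simp only [← Matrix.mulVec_mulVec, LinearMap.toMatrix'_mulVec] at h3
        exact congrArg ρ.asModuleEquiv.symm h3 }
  obtain ⟨r, hr⟩ := jacobson_density f
    (Finset.univ.image fun a => ρ.asModuleEquiv.symm (Pi.single a (1 : k)))
  refine ⟨fun σ => r.coeff σ, fun b a => ?_⟩
  have h := hr _ (Finset.mem_image_of_mem _ (Finset.mem_univ a))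
  have h2 := congrFun (congrArg ρ.asModuleEquiv h) b
  rw [Representation.asModuleEquiv_map_smul, Representation.asAlgebraHom_def,
    MonoidAlgebra.lift_apply, Finsupp.sum_fintype _ _ (by simp)] at h2
  have h4 : T.mulVec (Pi.single a (1 : k)) b = T b a := by simp
  rw [← h4]
  refine h2.trans ?_
  rw [LinearMap.sum_apply, Finset.sum_apply]
  refine Finset.sum_congr rfl fun σ _ => ?_
  change r.coeff σ * (Pi.single a (1 : k) : _ → k) (pAct σ b) = _
  simp [Pi.single_apply, eq_comm]

theorem kron_mul_kron (g h : ∀ i, Matrix (Fin (d i)) (Fin (d i)) k) :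
    kron g * kron h = kron fun i => g i * h i := by
  ext a b
  simp only [Matrix.mul_apply, kron, ← Finset.prod_mul_distrib]
  rw [Finset.prod_univ_sum, Fintype.piFinset_univ]

theorem kron_one : kron (fun i => (1 : Matrix (Fin (d i)) (Fin (d i)) k)) = 1 := by
  ext a b
  simp only [kron, Matrix.one_apply, Finset.prod_ite_zero, funext_iff]
  simp

theorem kron_isUnit (g : ∀ i, Matrix (Fin (d i)) (Fin (d i)) k) (hg : ∀ i, IsUnit (g i)) :
    IsUnit (kron g).det := by
  rw [← Matrix.isUnit_iff_isUnit_det]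
  refine IsUnit.of_mul_eq_one (kron fun i => (g i)⁻¹) ?_
  rw [kron_mul_kron, ← kron_one]
  congr 1
  funext i
  exact Matrix.mul_nonsing_inv _ ((Matrix.isUnit_iff_isUnit_det _).mp (hg i))

theorem kPow_eq (g : ∀ i, Matrix (Fin (d i)) (Fin (d i)) k) (a b : Fin m → ∀ i, Fin (d i)) :
    kPow g a b = ∏ j, kron g (a j) (b j) := rfl

theorem trMon_swap (σ : Fin n → Equiv.Perm (Fin m))
    (g : ∀ i, Matrix (Fin (d i)) (Fin (d i)) k)
    (N : Fin m → Matrix (∀ i, Fin (d i)) (∀ i, Fin (d i)) k) :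
    trMon σ (fun j => kron g * N j) = trMon σ (fun j => N j * kron g) := by
  have hL : trMon σ (fun j => kron g * N j) =
      ∑ a, ∑ p, kPow g a p * ∏ j, N j (p j) (pAct σ a j) := by
    refine Finset.sum_congr rfl fun a _ => ?_
    simp only [Matrix.mul_apply]
    rw [Finset.prod_univ_sum, Fintype.piFinset_univ]
    refine Finset.sum_congr rfl fun p _ => ?_
    rw [Finset.prod_mul_distrib]
    rfl
  have hR : trMon σ (fun j => N j * kron g) =
      ∑ p, ∑ q, (∏ j, N j (p j) (q j)) * kPow g q (pAct σ p) := by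
    refine Finset.sum_congr rfl fun a _ => ?_
    simp only [Matrix.mul_apply]
    rw [Finset.prod_univ_sum, Fintype.piFinset_univ]
    refine Finset.sum_congr rfl fun p _ => ?_
    rw [Finset.prod_mul_distrib]
    rfl
  rw [hL, hR, Finset.sum_comm]
  refine Finset.sum_congr rfl fun p _ => ?_
  rw [← Equiv.sum_comp (pEquiv σ) (fun q => (∏ j, N j (p j) (q j)) * kPow g q (pAct σ p))]
  refine Finset.sum_congr rfl fun a _ => ?_
  change _ = (∏ j, N j (p j) (pAct σ a j)) * kPow g (pAct σ a) (pAct σ p)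
  rw [kPow_act, mul_comm]

theorem trMon_multilinear (σ : Fin n → Equiv.Perm (Fin m)) :
    IsMultilinearFn (trMon (k := k) (d := d) σ) := by
  intro M j x y c
  unfold trMon
  rw [Finset.mul_sum, ← Finset.sum_add_distrib]
  refine Finset.sum_congr rfl fun a _ => ?_
  rw [← Finset.mul_prod_erase _ _ (Finset.mem_univ j),
    ← Finset.mul_prod_erase _ _ (Finset.mem_univ j),
    ← Finset.mul_prod_erase _ _ (Finset.mem_univ j)]
  have : ∀ z, ∏ l ∈ Finset.univ.erase j, Function.update M j z l (a l) (fun i => a (σ i l) i)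
      = ∏ l ∈ Finset.univ.erase j, M l (a l) (fun i => a (σ i l) i) := by
    intro z
    refine Finset.prod_congr rfl fun l hl => ?_
    rw [Function.update_of_ne (Finset.ne_of_mem_erase hl)]
  simp only [this, Function.update_self, Matrix.add_apply, Matrix.smul_apply, smul_eq_mul]
  ring

theorem mult_expand (F : (Fin m → Matrix (∀ i, Fin (d i)) (∀ i, Fin (d i)) k) → k)
    (hF : IsMultilinearFn F) (M : Fin m → Matrix (∀ i, Fin (d i)) (∀ i, Fin (d i)) k) :
    F M = ∑ a : Fin m → ∀ i, Fin (d i), ∑ b : Fin m → ∀ i, Fin (d i),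
      F (fun j => Matrix.single (a j) (b j) 1) * ∏ j, M j (a j) (b j) := by
  have h0 : ∀ (M : Fin m → Matrix (∀ i, Fin (d i)) (∀ i, Fin (d i)) k) j,
      F (Function.update M j 0) = 0 := by
    intro M j
    have := hF M j 0 0 1
    simpa using this
  let F' : MultilinearMap k
      (fun _ : Fin m => Matrix (∀ i, Fin (d i)) (∀ i, Fin (d i)) k) k :=
    MultilinearMap.mk' F
      (fun M j x y => by have := hF M j x y 1; simpa using this)
      (fun M j c x => by have := hF M j 0 x c; simpa [h0] using this)
  have hM : M = fun j => ∑ p : (∀ i, Fin (d i)) × (∀ i, Fin (d i)),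
      M j p.1 p.2 • Matrix.single p.1 p.2 (1 : k) := by
    funext j
    conv_lhs => rw [Matrix.matrix_eq_sum_single (M j)]
    rw [Fintype.sum_prod_type]
    simp
  have h1 : F M = ∑ r : Fin m → (∀ i, Fin (d i)) × (∀ i, Fin (d i)),
      F (fun j => Matrix.single (r j).1 (r j).2 1) * ∏ j, M j (r j).1 (r j).2 := by
    conv_lhs => rw [hM]
    refine (F'.map_sum _).trans ?_
    refine Finset.sum_congr rfl fun r _ => ?_
    rw [MultilinearMap.map_smul_univ, smul_eq_mul, mul_comm]
    rfl
  rw [h1, ← Fintype.sum_prod_type']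
  exact Fintype.sum_equiv (Equiv.arrowProdEquivProdArrow _ _ _) _ _ fun r => rfl

theorem coeff_comm (F : (Fin m → Matrix (∀ i, Fin (d i)) (∀ i, Fin (d i)) k) → k)
    (hF : IsMultilinearFn F) (g : ∀ i, Matrix (Fin (d i)) (Fin (d i)) k)
    (hg : ∀ N : Fin m → Matrix (∀ i, Fin (d i)) (∀ i, Fin (d i)) k,
      F (fun j => kron g * N j) = F (fun j => N j * kron g)) :
    (Matrix.of fun b a : Fin m → ∀ i, Fin (d i) => F (fun j => Matrix.single (a j) (b j) 1))
        * kPow g =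
      kPow g * Matrix.of fun b a : Fin m → ∀ i, Fin (d i) =>
        F (fun j => Matrix.single (a j) (b j) 1) := by
  classical
  have hprod : ∀ (u v : Fin m → ∀ i, Fin (d i)),
      (∏ j, if u j = v j then (1 : k) else 0) = if u = v then 1 else 0 := by
    intro u v
    rw [Finset.prod_ite_zero]
    simp [funext_iff]
  ext q p
  have h := hg (fun j => Matrix.single (p j) (q j) 1)
  rw [mult_expand F hF, mult_expand F hF (fun j => _ * kron g)] at h
  have e1 : ∀ a b : Fin m → ∀ i, Fin (d i),
      (∏ j, (kron g * Matrix.single (p j) (q j) (1 : k)) (a j) (b j)) =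
        kPow g a p * if q = b then 1 else 0 := by
    intro a b
    rw [← hprod, kPow_eq, ← Finset.prod_mul_distrib]
    refine Finset.prod_congr rfl fun j _ => ?_
    simp [Matrix.mul_apply, Matrix.single_apply, ite_and]
  have e2 : ∀ a b : Fin m → ∀ i, Fin (d i),
      (∏ j, (Matrix.single (p j) (q j) (1 : k) * kron g) (a j) (b j)) =
        (if p = a then 1 else 0) * kPow g q b := by
    intro a b
    rw [← hprod, kPow_eq, ← Finset.prod_mul_distrib]
    refine Finset.prod_congr rfl fun j _ => ?_
    simp [Matrix.mul_apply, Matrix.single_apply, ite_and]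
  simp only [e1, e2] at h
  rw [Matrix.mul_apply, Matrix.mul_apply]
  simp only [Matrix.of_apply]
  calc _ = _ := ?_
    _ = _ := h
    _ = _ := ?_
  · refine Finset.sum_congr rfl fun a _ => ?_
    rw [Finset.sum_eq_single q]
    · simp
    · intro b _ hb
      simp [hb.symm]
    · simp
  · rw [Finset.sum_eq_single p]
    · refine Finset.sum_congr rfl fun b _ => ?_
      simp [mul_comm]
    · intro b _ hb
      simp [hb.symm]
    · simp

end FFTaux


/-- The multilinear `GL_d`-invariant functions on `End(V)^{⊕m}`, where
`GL_d = GL(V₁)×⋯×GL(Vₙ)` acts by simultaneous local conjugation on `V = V₁⊗⋯⊗Vₙ`,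
are exactly the linear span of the trace monomials `Tr_σ`, `σ ∈ (S_m)ⁿ`. -/
theorem stmt_6 {k : Type*} [Field k] [IsAlgClosed k] [CharZero k] {n m : ℕ}
    (d : Fin n → ℕ)
    (F : (Fin m → Matrix (∀ i, Fin (d i)) (∀ i, Fin (d i)) k) → k) :
    (IsMultilinearFn F ∧
      ∀ g : ∀ i, Matrix (Fin (d i)) (Fin (d i)) k, (∀ i, IsUnit (g i)) →
        ∀ M, F (fun j => kron g * M j * (kron g)⁻¹) = F M) ↔
    (∃ c : (Fin n → Equiv.Perm (Fin m)) → k,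
      F = fun M => ∑ σ : Fin n → Equiv.Perm (Fin m), c σ * trMon σ M) := by
  classical
  constructor
  · rintro ⟨hF, hinv⟩
    have hcomm : ∀ g : ∀ i, Matrix (Fin (d i)) (Fin (d i)) k, (∀ i, IsUnit (g i)) →
        ∀ N : Fin m → Matrix (∀ i, Fin (d i)) (∀ i, Fin (d i)) k,
      F (fun j => kron g * N j) = F (fun j => N j * kron g) := by
      intro g hg N
      rw [← hinv g hg (fun j => N j * kron g)]
      congr 1
      funext j
      rw [← Matrix.mul_assoc, Matrix.mul_nonsing_inv_cancel_right _ _ (kron_isUnit g hg)]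
    have hT := fun g hg => coeff_comm F hF g (hcomm g hg)
    obtain ⟨c, hc⟩ := exists_coeff _ fun S hS => comm_of_inv _ S hT hS
    refine ⟨fun σ => c σ⁻¹, ?_⟩
    funext M
    rw [mult_expand F hF]
    have h1 : ∀ a b : Fin m → ∀ i, Fin (d i), F (fun j => Matrix.single (a j) (b j) 1) =
        ∑ σ, if b = pAct σ a then c σ⁻¹ else 0 := by
      intro a b
      refine (hc b a).trans ?_
      rw [← Equiv.sum_comp (Equiv.inv _)]
      refine Finset.sum_congr rfl fun σ _ => ?_
      have : a = pAct σ⁻¹ b ↔ b = pAct σ a := by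
        constructor
        · rintro rfl
          funext j i
          simp [pAct]
        · rintro rfl
          funext j i
          simp [pAct]
      simp only [Equiv.inv_apply, this]
    simp only [h1, Finset.sum_mul, trMon, Finset.mul_sum]
    simp_rw [Finset.sum_comm (s := Finset.univ (α := Fin m → ∀ i, Fin (d i)))
      (t := Finset.univ (α := Fin n → Equiv.Perm (Fin m)))]
    refine Finset.sum_congr rfl fun σ _ => Finset.sum_congr rfl fun a _ => ?_
    rw [Finset.sum_eq_single (pAct σ a)]
    · rw [if_pos rfl]
      rfl
    · intro b _ hb
      rw [if_neg hb, zero_mul]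
    · simp
  · rintro ⟨c, rfl⟩
    refine ⟨?_, ?_⟩
    · intro M j x y t
      simp only [trMon_multilinear _ M j x y t, Finset.mul_sum, ← Finset.sum_add_distrib]
      refine Finset.sum_congr rfl fun σ _ => ?_
      ring
    · intro g hg M
      refine Finset.sum_congr rfl fun σ _ => ?_
      congr 1
      have := trMon_swap σ g (fun j => M j * (kron g)⁻¹)
      simp only [← Matrix.mul_assoc] at this
      rw [this]
      simp only [Matrix.nonsing_inv_mul_cancel_right _ _ (kron_isUnit g hg)]
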